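/- arXiv:1806.03232 — 12 statements merged into one kernel-verified Lean document; each statement's English description precedes it below -/
import Mathlib

section
/- Let M be an n×n real matrix (n ≥ 1) with nonnegative entries whose row sums are all at most 1, such that M is irreducible (for every pair of indices i ≠ j there exists an integer k ≥ 1 with (M^k)_{ij} > 0) and at least one row of M has sum strictly less than 1. Then I − M is invertible, the Neumann series ∑_{t=0}^∞ M^t converges, its sum equals (I − M)^{-1}, and every entry of (I − M)^{-1} is nonnegative. -/
open Matrix

/-- If an `n × n` nonnegative real matrix `M` (with `n ≥ 1`) has all row sums at most one,
is irreducible, and at least one row sum is strictly less than one, then `I - M` is invertible,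
the Neumann series `∑ M^t` converges, its sum equals `(I - M)⁻¹`, and every entry of
`(I - M)⁻¹` is nonnegative. -/
theorem stmt0 (n : ℕ) (hn : 1 ≤ n) (M : Matrix (Fin n) (Fin n) ℝ)
    (hnonneg : ∀ i j, 0 ≤ M i j)
    (hrow : ∀ i, ∑ j, M i j ≤ 1)
    (hirr : ∀ i j : Fin n, i ≠ j → ∃ k : ℕ, 1 ≤ k ∧ 0 < (M ^ k) i j)
    (hsub : ∃ i, ∑ j, M i j < 1) :
    IsUnit (1 - M) ∧
      Summable (fun t : ℕ => M ^ t) ∧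
      (∑' t : ℕ, M ^ t) = (1 - M)⁻¹ ∧
      ∀ i j, 0 ≤ (1 - M)⁻¹ i j := by
  have hpow : ∀ t : ℕ, ∀ i j, 0 ≤ (M ^ t) i j := by
    intro t
    induction t with
    | zero => intro i j; rw [pow_zero, Matrix.one_apply]; split_ifs <;> norm_num
    | succ t ih =>
      intro i j
      rw [pow_succ, Matrix.mul_apply]
      exact Finset.sum_nonneg fun k _ => mul_nonneg (ih i k) (hnonneg k j)
  have hr1 : ∀ t i, ∑ j, (M ^ (t+1)) i j = ∑ k, (M ^ t) i k * ∑ j, M k j := by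
    intro t i
    simp only [pow_succ, Matrix.mul_apply, Finset.mul_sum]
    exact Finset.sum_comm
  have hanti : ∀ i, Antitone (fun t : ℕ => ∑ j, (M ^ t) i j) := by
    intro i
    refine antitone_nat_of_succ_le fun t => ?_
    rw [hr1]
    exact Finset.sum_le_sum fun k _ => mul_le_of_le_one_right (hpow t i k) (hrow k)
  have hle1 : ∀ t i, ∑ j, (M ^ t) i j ≤ 1 := by
    intro t i
    have := hanti i (Nat.zero_le t)
    simpa [Matrix.one_apply] using this
  obtain ⟨i0, hi0⟩ := hsub
  have hex : ∀ i, ∃ k : ℕ, ∑ j, (M ^ k) i j < 1 := by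
    intro i
    by_cases h : i = i0
    · exact ⟨1, by simpa [h] using hi0⟩
    · obtain ⟨k, -, hk⟩ := hirr i i0 h
      refine ⟨k + 1, lt_of_lt_of_le ?_ (hle1 k i)⟩
      rw [hr1]
      refine Finset.sum_lt_sum
        (fun k' _ => mul_le_of_le_one_right (hpow k i k') (hrow k')) ⟨i0, Finset.mem_univ _, ?_⟩
      exact mul_lt_of_lt_one_right hk hi0
  choose k hk using hex
  let K := Finset.univ.sup k
  have hK : ∀ i, ∑ j, (M ^ K) i j < 1 := fun i =>
    lt_of_le_of_lt (hanti i (Finset.le_sup (Finset.mem_univ i))) (hk i)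
  -- bound
  let G := ∑ s ∈ Finset.range K, M ^ s
  have hG : ∀ i j, 0 ≤ G i j := by
    intro i j
    simp only [G, Matrix.sum_apply]
    exact Finset.sum_nonneg fun s _ => hpow s i j
  have hident : ∀ T : ℕ, (∑ t ∈ Finset.range T, M ^ t) * (1 - M ^ K) = G - M ^ T * G := by
    intro T
    have h1 : (1 - M) * G = 1 - M ^ K := mul_neg_geom_sum M K
    have h2 : (∑ t ∈ Finset.range T, M ^ t) * (1 - M) = 1 - M ^ T := geom_sum_mul_neg M T
    rw [← h1, ← mul_assoc, h2, sub_mul, one_mul]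
  have hbound : ∀ i j T, ∑ t ∈ Finset.range T, (M ^ t) i j
      ≤ (∑ l, G i l) / (1 - ∑ l, (M ^ K) j l) := by
    intro i j T
    have hpos : ∀ j, 0 < 1 - ∑ l, (M ^ K) j l := fun j => sub_pos.2 (hK j)
    rw [le_div_iff₀ (hpos j)]
    have hS : ∀ j, 0 ≤ (∑ t ∈ Finset.range T, M ^ t) i j := by
      intro j
      rw [Matrix.sum_apply]
      exact Finset.sum_nonneg fun s _ => hpow s i j
    rw [← Matrix.sum_apply]
    have e : ∑ j, (∑ t ∈ Finset.range T, M ^ t) i j * (1 - ∑ l, (M ^ K) j l)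
        = ∑ l, (G - M ^ T * G) i l := by
      rw [← hident T]
      simp only [Matrix.mul_apply (M := ∑ t ∈ Finset.range T, M ^ t)]
      rw [Finset.sum_comm]
      refine Finset.sum_congr rfl fun j _ => ?_
      rw [← Finset.mul_sum]
      simp [Matrix.sub_apply, Matrix.one_apply]
    calc _ ≤ ∑ j, (∑ t ∈ Finset.range T, M ^ t) i j * (1 - ∑ l, (M ^ K) j l) :=
          Finset.single_le_sum (f := fun j => (∑ t ∈ Finset.range T, M ^ t) i j * (1 - ∑ l, (M ^ K) j l))
            (fun j _ => mul_nonneg (hS j) (hpos j).le) (Finset.mem_univ j)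
      _ = _ := e
      _ ≤ _ := by
        refine Finset.sum_le_sum fun l _ => ?_
        rw [Matrix.sub_apply, sub_le_self_iff, Matrix.mul_apply]
        exact Finset.sum_nonneg fun s _ => mul_nonneg (hpow T i s) (hG s l)
  have hsum : Summable (fun t : ℕ => M ^ t) := by
    refine Pi.summable.2 fun i => Pi.summable.2 fun j => ?_
    exact summable_of_sum_range_le (fun t => hpow t i j) (hbound i j)
  have hl : (1 - M) * (∑' t : ℕ, M ^ t) = 1 := hsum.one_sub_mul_tsum_pow
  have hinv : (1 - M)⁻¹ = ∑' t : ℕ, M ^ t := Matrix.inv_eq_right_inv hl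
  refine ⟨IsUnit.of_mul_eq_one _ hl, hsum, hinv.symm, fun i j => ?_⟩
  have h := Pi.hasSum.1 (Pi.hasSum.1 hsum.hasSum i) j
  rw [hinv]
  exact h.nonneg fun t => hpow t i j
end

section
/- Let P be an n×n row-stochastic real matrix, let α ∈ ℝ^n with 0 ≤ α_i ≤ 1 for all i, set P̂ = (I − Diag(α))·P, assume I − P̂ is invertible and let Ẑ = (I − P̂)^{-1}. Let σ_in ∈ ℝ^n be nonnegative with ∑_i (σ_in)_i = 1, let n̄_ref = Ẑ^⊤ σ_in, and define σ_out by (σ_out)_j = α_j · (n̄_ref)_j. Define the matrix Γ_ref = Diag(σ_in) · Ẑ · Diag(α). Then: (1) Ẑ α = 1 (the all-ones vector); (2) for every i, ∑_j (Γ_ref)_{ij} = (σ_in)_i; (3) for every j, ∑_i (Γ_ref)_{ij} = (σ_out)_j; and (4) ∑_{i,j} (Γ_ref)_{ij} = 1. -/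
open Matrix

/-- The reference coupling built from the killed Markov process has the prescribed starting
margin `σ_in` and ending margin `σ_out`, and sums to one. -/
theorem stmt2 (n : ℕ) (P : Matrix (Fin n) (Fin n) ℝ)
    (hP0 : ∀ i j, 0 ≤ P i j) (hP1 : ∀ i, ∑ j, P i j = 1)
    (α : Fin n → ℝ) (hα : ∀ i, 0 ≤ α i ∧ α i ≤ 1)
    (hinv : IsUnit (1 - (1 - Matrix.diagonal α) * P))
    (σin : Fin n → ℝ) (hσ0 : ∀ i, 0 ≤ σin i) (hσ1 : ∑ i, σin i = 1) :
    let Phat := (1 - Matrix.diagonal α) * P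
    let Zhat := (1 - Phat)⁻¹
    let nref := Zhatᵀ *ᵥ σin
    let σout := fun j => α j * nref j
    let Γref := Matrix.diagonal σin * Zhat * Matrix.diagonal α
    (Zhat *ᵥ α = fun _ => (1 : ℝ)) ∧
      (∀ i, ∑ j, Γref i j = σin i) ∧
      (∀ j, ∑ i, Γref i j = σout j) ∧
      (∑ i, ∑ j, Γref i j = 1) := by
  intro Phat Zhat nref σout Γref
  have hone : P *ᵥ (fun _ => (1 : ℝ)) = fun _ => 1 := by
    ext i
    simp [Matrix.mulVec, dotProduct, hP1]
  have hA : (1 - Phat) *ᵥ (fun _ => (1 : ℝ)) = α := by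
    simp only [Phat]
    rw [Matrix.sub_mulVec, ← Matrix.mulVec_mulVec, hone, Matrix.sub_mulVec]
    ext i
    simp [Matrix.mulVec_diagonal]
  have h1 : Zhat *ᵥ α = fun _ => (1 : ℝ) := by
    have hdet : IsUnit (1 - Phat).det := (Matrix.isUnit_iff_isUnit_det _).1 hinv
    rw [← hA, Matrix.mulVec_mulVec]
    simp only [Zhat]
    rw [Matrix.nonsing_inv_mul _ hdet, Matrix.one_mulVec]
  have hΓ : ∀ i j, Γref i j = σin i * Zhat i j * α j := by
    intro i j
    simp only [Γref]
    rw [Matrix.mul_diagonal, Matrix.diagonal_mul]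
  have h2 : ∀ i, ∑ j, Γref i j = σin i := by
    intro i
    have h := congrFun h1 i
    simp only [Matrix.mulVec, dotProduct] at h
    simp only [hΓ, mul_assoc]
    rw [← Finset.mul_sum, h, mul_one]
  refine ⟨h1, h2, ?_, ?_⟩
  · intro j
    simp only [hΓ, σout, nref, Matrix.mulVec, dotProduct, Matrix.transpose_apply, Finset.mul_sum]
    refine Finset.sum_congr rfl fun i _ => ?_
    ring
  · simp only [h2, hσ1]
end

section
/- Let I and J be finite nonempty sets, c : I×J → ℝ, r : I×J → ℝ with r_{ij} > 0 for all i,j, T > 0, and let σ_in : I → ℝ and σ_out : J → ℝ be probability vectors (nonnegative entries summing to 1). Suppose there exist u : I → ℝ with u_i > 0 and v : J → ℝ with v_j > 0 such that the matrix γ*_{ij} = u_i · v_j · r_{ij} · exp(−c_{ij}/T) satisfies ∑_j γ*_{ij} = (σ_in)_i for every i and ∑_i γ*_{ij} = (σ_out)_j for every j. Then γ* is the unique minimizer of F(γ) = ∑_{i,j} γ_{ij}·c_{ij} + T·∑_{i,j} γ_{ij}·log(γ_{ij}/r_{ij}) over the transport polytope U(σ_in, σ_out). -/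
/-- If a Gibbs-form matrix `γ*_{ij} = u_i v_j r_{ij} exp(-c_{ij}/T)` (with `u, v` positive)
satisfies the margin constraints, then it is the unique minimizer of the free energy over
the transport polytope `U(σ_in, σ_out)`. -/
theorem stmt4 (I J : Type*) [Fintype I] [Fintype J] [Nonempty I] [Nonempty J]
    (c r : I → J → ℝ) (hr : ∀ i j, 0 < r i j) (T : ℝ) (hT : 0 < T)
    (σin : I → ℝ) (σout : J → ℝ)
    (hσin0 : ∀ i, 0 ≤ σin i) (hσin1 : ∑ i, σin i = 1)
    (hσout0 : ∀ j, 0 ≤ σout j) (hσout1 : ∑ j, σout j = 1)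
    (u : I → ℝ) (v : J → ℝ) (hu : ∀ i, 0 < u i) (hv : ∀ j, 0 < v j)
    (γstar : I → J → ℝ)
    (hγstar : ∀ i j, γstar i j = u i * v j * r i j * Real.exp (-(c i j) / T))
    (hrow : ∀ i, ∑ j, γstar i j = σin i)
    (hcol : ∀ j, ∑ i, γstar i j = σout j) :
    let U := fun γ : I → J → ℝ =>
      (∀ i j, 0 ≤ γ i j) ∧ (∀ i, ∑ j, γ i j = σin i) ∧ (∀ j, ∑ i, γ i j = σout j)
    let F := fun γ : I → J → ℝ =>
      ∑ i, ∑ j, γ i j * c i j + T * ∑ i, ∑ j, γ i j * Real.log (γ i j / r i j)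
    U γstar ∧ (∀ γ, U γ → F γstar ≤ F γ) ∧ (∀ γ, U γ → F γ = F γstar → γ = γstar) := by
  intro U F
  have hpos : ∀ i j, 0 < γstar i j := fun i j => by
    rw [hγstar]
    have := hu i
    have := hv j
    have := hr i j
    positivity
  have hU : U γstar := ⟨fun i j => (hpos i j).le, hrow, hcol⟩
  have hpt : ∀ (i : I) (j : J) (x : ℝ), 0 ≤ x →
      x * c i j + T * (x * Real.log (x / r i j)) =
        T * (x * Real.log (u i)) + T * (x * Real.log (v j)) + T * x - T * γstar i j
          + T * (γstar i j * InformationTheory.klFun (x / γstar i j)) := by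
    intro i j x hx
    have hg := (hpos i j).ne'
    rcases hx.eq_or_lt with h0 | h0
    · subst h0
      simp [InformationTheory.klFun_zero]
    · have hl : Real.log (γstar i j) =
          Real.log (u i) + Real.log (v j) + Real.log (r i j) - c i j / T := by
        rw [hγstar, Real.log_mul (by have := hu i; have := hv j; have := hr i j; positivity)
          (Real.exp_ne_zero _), Real.log_mul (mul_pos (hu i) (hv j)).ne' (hr i j).ne',
          Real.log_mul (hu i).ne' (hv j).ne', Real.log_exp]
        ring
      have e : γstar i j * InformationTheory.klFun (x / γstar i j)
          = x * (Real.log x - Real.log (γstar i j)) + γstar i j - x := by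
        rw [InformationTheory.klFun_apply, Real.log_div h0.ne' hg]
        field_simp
      rw [e, hl, Real.log_div h0.ne' (hr i j).ne']
      field_simp
      ring
  have key : ∀ γ, U γ → F γ = T * (∑ i, σin i * Real.log (u i)) +
      T * (∑ j, σout j * Real.log (v j)) +
      T * ∑ i, ∑ j, γstar i j * InformationTheory.klFun (γ i j / γstar i j) := by
    rintro γ ⟨h0, h1, h2⟩
    have a1 : ∑ i, ∑ j, γ i j * Real.log (u i) = ∑ i, σin i * Real.log (u i) :=
      Finset.sum_congr rfl fun i _ => by rw [← Finset.sum_mul, h1]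
    have a2 : ∑ i, ∑ j, γ i j * Real.log (v j) = ∑ j, σout j * Real.log (v j) := by
      rw [Finset.sum_comm]
      exact Finset.sum_congr rfl fun i _ => by rw [← Finset.sum_mul, h2]
    have a3 : ∑ i, ∑ j, γ i j = ∑ i, ∑ j, γstar i j := by simp only [h1, hrow]
    have : F γ = ∑ i, ∑ j, (γ i j * c i j + T * (γ i j * Real.log (γ i j / r i j))) := by
      simp only [F, Finset.sum_add_distrib, Finset.mul_sum]
    rw [this]
    simp only [fun i j => hpt i j (γ i j) (h0 i j)]
    simp only [Finset.sum_add_distrib, Finset.sum_sub_distrib, ← Finset.mul_sum]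
    rw [a1, a2, a3]
    ring
  have hs : ∑ i, ∑ j, γstar i j * InformationTheory.klFun (γstar i j / γstar i j) = 0 :=
    Finset.sum_eq_zero fun i _ => Finset.sum_eq_zero fun j _ => by
      rw [div_self (hpos i j).ne', InformationTheory.klFun_one, mul_zero]
  have hnn : ∀ γ, U γ → ∀ i j,
      0 ≤ γstar i j * InformationTheory.klFun (γ i j / γstar i j) := fun γ h i j =>
    mul_nonneg (hpos i j).le
      (InformationTheory.klFun_nonneg (div_nonneg (h.1 i j) (hpos i j).le))
  refine ⟨hU, fun γ h => ?_, fun γ h he => ?_⟩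
  · rw [key γ h, key γstar hU, hs]
    have : 0 ≤ ∑ i, ∑ j, γstar i j * InformationTheory.klFun (γ i j / γstar i j) :=
      Finset.sum_nonneg fun i _ => Finset.sum_nonneg fun j _ => hnn γ h i j
    have := mul_nonneg hT.le this
    linarith
  · rw [key γ h, key γstar hU, hs] at he
    have hz : T * ∑ i, ∑ j, γstar i j * InformationTheory.klFun (γ i j / γstar i j) = 0 := by
      linarith
    have hz := (mul_eq_zero.mp hz).resolve_left hT.ne'
    rw [Finset.sum_eq_zero_iff_of_nonneg
      (fun i _ => Finset.sum_nonneg fun j _ => hnn γ h i j)] at hz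
    funext i j
    have hi := hz i (Finset.mem_univ i)
    rw [Finset.sum_eq_zero_iff_of_nonneg (fun j _ => hnn γ h i j)] at hi
    have hij := (mul_eq_zero.mp (hi j (Finset.mem_univ j))).resolve_left (hpos i j).ne'
    rw [InformationTheory.klFun_eq_zero_iff (div_nonneg (h.1 i j) (hpos i j).le)] at hij
    exact (div_eq_one_iff_eq (hpos i j).ne').mp hij
end

section
/- Let I and J be finite nonempty sets, c : I×J → ℝ, r : I×J → ℝ with r_{ij} > 0 for all i,j, T > 0, and let σ_in : I → ℝ and σ_out : J → ℝ be probability vectors. Suppose u : I → ℝ and v : J → ℝ are positive vectors such that γ*_{ij} = u_i · v_j · r_{ij} · exp(−c_{ij}/T) satisfies ∑_j γ*_{ij} = (σ_in)_i for every i and ∑_i γ*_{ij} = (σ_out)_j for every j. Define λ_in,i = −T·log u_i and λ_out,j = −T·log v_j. Then the value of the free energy at γ* is F(γ*) = ∑_{i,j} γ*_{ij}·c_{ij} + T·∑_{i,j} γ*_{ij}·log(γ*_{ij}/r_{ij}) = −(∑_i λ_in,i·(σ_in)_i + ∑_j λ_out,j·(σ_out)_j). -/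
/-- The optimal free energy equals minus the inner products of the Lagrange multiplier vectors
`λ_in = -T log u` and `λ_out = -T log v` with the prescribed margins. -/
theorem stmt5 (I J : Type*) [Fintype I] [Fintype J] [Nonempty I] [Nonempty J]
    (c r : I → J → ℝ) (hr : ∀ i j, 0 < r i j) (T : ℝ) (hT : 0 < T)
    (σin : I → ℝ) (σout : J → ℝ)
    (hσin0 : ∀ i, 0 ≤ σin i) (hσin1 : ∑ i, σin i = 1)
    (hσout0 : ∀ j, 0 ≤ σout j) (hσout1 : ∑ j, σout j = 1)
    (u : I → ℝ) (v : J → ℝ) (hu : ∀ i, 0 < u i) (hv : ∀ j, 0 < v j)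
    (γstar : I → J → ℝ)
    (hγstar : ∀ i j, γstar i j = u i * v j * r i j * Real.exp (-(c i j) / T))
    (hrow : ∀ i, ∑ j, γstar i j = σin i)
    (hcol : ∀ j, ∑ i, γstar i j = σout j)
    (lamIn : I → ℝ) (hlamIn : ∀ i, lamIn i = -T * Real.log (u i))
    (lamOut : J → ℝ) (hlamOut : ∀ j, lamOut j = -T * Real.log (v j)) :
    ∑ i, ∑ j, γstar i j * c i j
        + T * ∑ i, ∑ j, γstar i j * Real.log (γstar i j / r i j)
      = -(∑ i, lamIn i * σin i + ∑ j, lamOut j * σout j) := by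
  have hlog : ∀ i j, Real.log (γstar i j / r i j)
      = Real.log (u i) + Real.log (v j) + -(c i j) / T := by
    intro i j
    have h1 : γstar i j / r i j = u i * v j * Real.exp (-(c i j) / T) := by
      rw [hγstar]
      have := (hr i j).ne'
      field_simp
    rw [h1, Real.log_mul (mul_pos (hu i) (hv j)).ne' (Real.exp_pos _).ne',
      Real.log_mul (hu i).ne' (hv j).ne', Real.log_exp]
  have h1 : ∑ i, lamIn i * σin i = ∑ i, ∑ j, lamIn i * γstar i j :=
    Finset.sum_congr rfl fun i _ => by rw [← hrow, Finset.mul_sum]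
  have h2 : ∑ j, lamOut j * σout j = ∑ i, ∑ j, lamOut j * γstar i j := by
    rw [Finset.sum_comm]
    exact Finset.sum_congr rfl fun j _ => by rw [← hcol, Finset.mul_sum]
  rw [h1, h2]
  simp only [Finset.mul_sum, ← Finset.sum_add_distrib, ← Finset.sum_neg_distrib]
  refine Finset.sum_congr rfl fun i _ => Finset.sum_congr rfl fun j _ => ?_
  rw [hlog, hlamIn, hlamOut]
  have := hT.ne'
  field_simp
  ring
end

section
/- Let Ŵ be an n×n real matrix with nonnegative entries such that I − Ŵ is invertible, and let Ẑ = (I − Ŵ)^{-1}. Let σ_in, α, n̄_ref ∈ ℝ^n be nonnegative vectors and let μ_in, μ_out ∈ ℝ^n be positive vectors satisfying the fixed-point equations μ_in = 1 ÷ (Ẑ(μ_out ∘ α)) and μ_out = n̄_ref ÷ (Ẑ^⊤(μ_in ∘ σ_in)), where ∘ and ÷ denote elementwise product and division and 1 is the all-ones vector (in particular the denominators are entrywise nonzero). Define Γ = Diag(μ_in ∘ σ_in) · Ẑ · Diag(μ_out ∘ α). Then for every i, ∑_j Γ_{ij} = (σ_in)_i, and for every j, ∑_i Γ_{ij} = α_j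 · (n̄_ref)_j. -/
open Matrix

/-- When the Lagrange scaling vectors `μ_in, μ_out` satisfy the balancing fixed-point equations,
the coupling matrix `Γ = Diag(μ_in ∘ σ_in) Ẑ Diag(μ_out ∘ α)` has row margins `σ_in` and
column margins `σ_out = α ∘ n̄_ref`. -/
theorem stmt7 (n : ℕ) (What : Matrix (Fin n) (Fin n) ℝ)
    (hW : ∀ i j, 0 ≤ What i j) (hinv : IsUnit (1 - What))
    (Zhat : Matrix (Fin n) (Fin n) ℝ) (hZ : Zhat = (1 - What)⁻¹)
    (σin α nref : Fin n → ℝ)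
    (hσ : ∀ i, 0 ≤ σin i) (hα : ∀ i, 0 ≤ α i) (hnref : ∀ i, 0 ≤ nref i)
    (μin μout : Fin n → ℝ) (hμin : ∀ i, 0 < μin i) (hμout : ∀ i, 0 < μout i)
    (hd1 : ∀ i, (Zhat *ᵥ (μout * α)) i ≠ 0)
    (hd2 : ∀ i, (Zhatᵀ *ᵥ (μin * σin)) i ≠ 0)
    (hfix1 : ∀ i, μin i = 1 / (Zhat *ᵥ (μout * α)) i)
    (hfix2 : ∀ i, μout i = nref i / (Zhatᵀ *ᵥ (μin * σin)) i) :
    let Γ := Matrix.diagonal (μin * σin) * Zhat * Matrix.diagonal (μout * α)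
    (∀ i, ∑ j, Γ i j = σin i) ∧ (∀ j, ∑ i, Γ i j = α j * nref j) := by
  intro Γ
  have hΓ : ∀ i j, Γ i j = (μin i * σin i) * Zhat i j * (μout j * α j) := by
    intro i j
    simp only [Γ, Matrix.mul_diagonal, Matrix.diagonal_mul, Pi.mul_apply]
  constructor
  · intro i
    have h1 : μin i * (Zhat *ᵥ (μout * α)) i = 1 := (eq_div_iff (hd1 i)).1 (hfix1 i)
    have h2 : ∑ j, Γ i j = μin i * σin i * (Zhat *ᵥ (μout * α)) i := by
      simp only [hΓ, Matrix.mulVec, dotProduct, Finset.mul_sum, Pi.mul_apply]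
      exact Finset.sum_congr rfl fun j _ => by ring
    rw [h2]
    linear_combination σin i * h1
  · intro j
    have h1 : μout j * (Zhatᵀ *ᵥ (μin * σin)) j = nref j := (eq_div_iff (hd2 j)).1 (hfix2 j)
    have h2 : ∑ i, Γ i j = μout j * α j * (Zhatᵀ *ᵥ (μin * σin)) j := by
      simp only [hΓ, Matrix.mulVec, dotProduct, Finset.mul_sum, Pi.mul_apply, Matrix.transpose_apply]
      exact Finset.sum_congr rfl fun j _ => by ring
    rw [h2]
    linear_combination α j * h1
end

section
/- Let Ŵ be an n×n real matrix with nonnegative entries such that I − Ŵ is invertible, and let Ẑ = (I − Ŵ)^{-1}. Let σ_in, α, n̄_ref ∈ ℝ^n be nonnegative vectors and let μ_in, μ_out ∈ ℝ^n be positive vectors satisfying μ_in = 1 ÷ (Ẑ(μ_out ∘ α)) and μ_out = n̄_ref ÷ (Ẑ^⊤(μ_in ∘ σ_in)) (elementwise, with entrywise nonzero denominators). Define n̄_{ij} = (n̄_ref)_i · Ŵ_{ij} / ((μ_out)_i · (μ_in)_j) for all i, j, and n̄_i = (n̄_ref)_i / ((μ_in)_i · (μ_out)_i). Then for every i: ∑_j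 n̄_{ij} = n̄_i − α_i·(n̄_ref)_i and ∑_j n̄_{ji} = n̄_i − (σ_in)_i. -/
open Matrix

/-- Expected numbers of passages through edges and of visits to nodes in the
margin-constrained bag-of-paths model. -/
theorem stmt8 (n : ℕ) (What : Matrix (Fin n) (Fin n) ℝ)
    (hW : ∀ i j, 0 ≤ What i j) (hinv : IsUnit (1 - What))
    (Zhat : Matrix (Fin n) (Fin n) ℝ) (hZ : Zhat = (1 - What)⁻¹)
    (σin α nref : Fin n → ℝ)
    (hσ : ∀ i, 0 ≤ σin i) (hα : ∀ i, 0 ≤ α i) (hnref : ∀ i, 0 ≤ nref i)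
    (μin μout : Fin n → ℝ) (hμin : ∀ i, 0 < μin i) (hμout : ∀ i, 0 < μout i)
    (hd1 : ∀ i, (Zhat *ᵥ (μout * α)) i ≠ 0)
    (hd2 : ∀ i, (Zhatᵀ *ᵥ (μin * σin)) i ≠ 0)
    (hfix1 : ∀ i, μin i = 1 / (Zhat *ᵥ (μout * α)) i)
    (hfix2 : ∀ i, μout i = nref i / (Zhatᵀ *ᵥ (μin * σin)) i)
    (N : Matrix (Fin n) (Fin n) ℝ)
    (hN : ∀ i j, N i j = nref i * What i j / (μout i * μin j))
    (nbar : Fin n → ℝ) (hnbar : ∀ i, nbar i = nref i / (μin i * μout i)) :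
    ∀ i, (∑ j, N i j = nbar i - α i * nref i) ∧ (∑ j, N j i = nbar i - σin i) := by
  have hdet : IsUnit (1 - What).det := (Matrix.isUnit_iff_isUnit_det _).1 hinv
  have h1 : (1 - What) * Zhat = 1 := by rw [hZ]; exact Matrix.mul_nonsing_inv _ hdet
  have h2 : Zhat * (1 - What) = 1 := by rw [hZ]; exact Matrix.nonsing_inv_mul _ hdet
  obtain ⟨a, ha⟩ : ∃ a, a = Zhat *ᵥ (μout * α) := ⟨_, rfl⟩
  obtain ⟨b, hb⟩ : ∃ b, b = Zhatᵀ *ᵥ (μin * σin) := ⟨_, rfl⟩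
  have ea : (1 - What) *ᵥ a = μout * α := by
    rw [ha, Matrix.mulVec_mulVec, h1, Matrix.one_mulVec]
  have eb : (1 - What)ᵀ *ᵥ b = μin * σin := by
    rw [hb, Matrix.mulVec_mulVec, ← Matrix.transpose_mul, h2, Matrix.transpose_one,
      Matrix.one_mulVec]
  rw [← ha] at hd1 hfix1
  rw [← hb] at hd2 hfix2
  intro i
  have hi := (hμin i).ne'
  have ho := (hμout i).ne'
  have ea' : a i - ∑ j, What i j * a j = μout i * α i := by
    have := congrFun ea i
    rw [Matrix.sub_mulVec, Matrix.one_mulVec] at this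
    simpa [Matrix.mulVec, dotProduct] using this
  have eb' : b i - ∑ j, What j i * b j = μin i * σin i := by
    have := congrFun eb i
    rw [Matrix.transpose_sub, Matrix.transpose_one, Matrix.sub_mulVec,
      Matrix.one_mulVec] at this
    simpa [Matrix.mulVec, dotProduct] using this
  have hna : ∀ j, a j = 1 / μin j := fun j => by rw [hfix1 j]; simp
  have hnb : ∀ j, nref j = μout j * b j := fun j => by
    rw [hfix2 j, div_mul_cancel₀ _ (hd2 j)]
  constructor
  · have : ∑ j, N i j = nref i / μout i * ∑ j, What i j * a j := by
      rw [Finset.mul_sum]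
      refine Finset.sum_congr rfl fun j _ => ?_
      have := (hμin j).ne'
      rw [hN, hna]
      field_simp
    rw [this, hnbar, show ∑ j, What i j * a j = a i - μout i * α i by linarith, hna]
    field_simp
  · have : ∑ j, N j i = 1 / μin i * ∑ j, What j i * b j := by
      rw [Finset.mul_sum]
      refine Finset.sum_congr rfl fun j _ => ?_
      have := (hμout j).ne'
      rw [hN, hnb]
      field_simp
    rw [this, hnbar, show ∑ j, What j i * b j = b i - μin i * σin i by linarith, hnb]
    field_simp
end

section
/- Let Ŵ be an n×n real matrix with nonnegative entries such that I − Ŵ is invertible, and let Ẑ = (I − Ŵ)^{-1}. Let σ_in, α, n̄_ref ∈ ℝ^n be nonnegative vectors and let μ_in, μ_out ∈ ℝ^n be positive vectors satisfying μ_in = 1 ÷ (Ẑ(μ_out ∘ α)) and μ_out = n̄_ref ÷ (Ẑ^⊤(μ_in ∘ σ_in)) (elementwise, with entrywise nonzero denominators). Define the flow n̄_{ij} = (n̄_ref)_i · Ŵ_{ij} / ((μ_out)_i · (μ_in)_j) and σ_out by (σ_out)_i = α_i·(n̄_ref)_i. Then the flow is conserved with sources σ_in and sinks σ_out: for every node i,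 ∑_j n̄_{ij} − ∑_j n̄_{ji} = (σ_in)_i − (σ_out)_i. -/
open Matrix

/-- Flow conservation: the expected edge flows form a flow emitted by the source distribution
`σ_in`, absorbed by the target distribution `σ_out = α ∘ n̄_ref`, and conserved elsewhere. -/
theorem stmt9 (n : ℕ) (What : Matrix (Fin n) (Fin n) ℝ)
    (hW : ∀ i j, 0 ≤ What i j) (hinv : IsUnit (1 - What))
    (Zhat : Matrix (Fin n) (Fin n) ℝ) (hZ : Zhat = (1 - What)⁻¹)
    (σin α nref : Fin n → ℝ)
    (hσ : ∀ i, 0 ≤ σin i) (hα : ∀ i, 0 ≤ α i) (hnref : ∀ i, 0 ≤ nref i)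
    (μin μout : Fin n → ℝ) (hμin : ∀ i, 0 < μin i) (hμout : ∀ i, 0 < μout i)
    (hd1 : ∀ i, (Zhat *ᵥ (μout * α)) i ≠ 0)
    (hd2 : ∀ i, (Zhatᵀ *ᵥ (μin * σin)) i ≠ 0)
    (hfix1 : ∀ i, μin i = 1 / (Zhat *ᵥ (μout * α)) i)
    (hfix2 : ∀ i, μout i = nref i / (Zhatᵀ *ᵥ (μin * σin)) i)
    (N : Matrix (Fin n) (Fin n) ℝ)
    (hN : ∀ i j, N i j = nref i * What i j / (μout i * μin j))
    (σout : Fin n → ℝ) (hσout : ∀ i, σout i = α i * nref i) :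
    ∀ i, (∑ j, N i j) - (∑ j, N j i) = σin i - σout i := by
  have hdet : IsUnit (1 - What).det := (Matrix.isUnit_iff_isUnit_det _).1 hinv
  have e1 : (1 - What) *ᵥ (Zhat *ᵥ (μout * α)) = μout * α := by
    rw [Matrix.mulVec_mulVec, hZ, Matrix.mul_nonsing_inv _ hdet, Matrix.one_mulVec]
  have e2 : (1 - What)ᵀ *ᵥ (Zhatᵀ *ᵥ (μin * σin)) = μin * σin := by
    rw [Matrix.mulVec_mulVec, ← Matrix.transpose_mul, hZ, Matrix.nonsing_inv_mul _ hdet,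
      Matrix.transpose_one, Matrix.one_mulVec]
  generalize Zhat *ᵥ (μout * α) = u at *
  generalize Zhatᵀ *ᵥ (μin * σin) = v at *
  have hNv : ∀ i j, N i j = v i * (What i j * u j) := by
    intro i j
    have h1 := hd1 j
    have h2 := hd2 i
    have h3 := (hμout i).ne'
    have h4 : nref i = μout i * v i := by rw [hfix2 i]; field_simp
    rw [hN, h4, hfix1 j]
    field_simp
  intro i
  have f1 := congrFun e1 i
  have f2 := congrFun e2 i
  rw [Matrix.sub_mulVec, Matrix.one_mulVec] at f1
  rw [Matrix.transpose_sub, Matrix.transpose_one, Matrix.sub_mulVec, Matrix.one_mulVec] at f2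
  simp only [Pi.sub_apply, Pi.mul_apply, Matrix.mulVec, dotProduct, Matrix.transpose_apply] at f1 f2
  have s1 : ∑ j, N i j = v i * ∑ j, What i j * u j := by
    rw [Finset.mul_sum]; exact Finset.sum_congr rfl fun j _ => hNv i j
  have s2 : ∑ j, N j i = u i * ∑ j, What j i * v j := by
    rw [Finset.mul_sum]; exact Finset.sum_congr rfl fun j _ => by rw [hNv]; ring
  have h4 : nref i = μout i * v i := by
    have := hd2 i
    rw [hfix2 i]; field_simp
  have h5 : u i * μin i = 1 := by
    have := hd1 i
    rw [hfix1 i]; field_simp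
  rw [s1, s2, hσout, h4]
  linear_combination (-(v i)) * f1 + u i * f2 + σin i * h5
end

section
/- Let W be an n×n real matrix with nonnegative entries whose Neumann series ∑_{t=0}^∞ W^t converges, and let Z = ∑_{t=0}^∞ W^t = (I − W)^{-1}. Fix an index j, let Q be the (n−1)×(n−1) principal submatrix of W obtained by deleting row j and column j, and let q be the j-th column of W restricted to the indices different from j. Then the Neumann series ∑_{t=0}^∞ Q^t converges, I − Q is invertible, and for every i ≠ j, Z_{ij} = ((I − Q)^{-1} q)_i · Z_{jj}. -/
open Matrix

/-- First-passage decomposition: `Z_{ij} = ((I - Q)⁻¹ q)_i · Z_{jj}` where `Q` is the principal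
submatrix of `W` deleting row and column `j`, and `q` is the `j`-th column of `W` restricted to
the other indices. -/
theorem stmt11 (n : ℕ) (W : Matrix (Fin n) (Fin n) ℝ)
    (hW : ∀ i j, 0 ≤ W i j)
    (hsum : Summable (fun t : ℕ => W ^ t))
    (Z : Matrix (Fin n) (Fin n) ℝ) (hZ : Z = ∑' t : ℕ, W ^ t)
    (hZinv : Z = (1 - W)⁻¹)
    (j : Fin n)
    (Q : Matrix {i : Fin n // i ≠ j} {i : Fin n // i ≠ j} ℝ)
    (hQ : ∀ a b : {i : Fin n // i ≠ j}, Q a b = W a.1 b.1)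
    (q : {i : Fin n // i ≠ j} → ℝ) (hq : ∀ a : {i : Fin n // i ≠ j}, q a = W a.1 j) :
    Summable (fun t : ℕ => Q ^ t) ∧ IsUnit (1 - Q) ∧
      ∀ i : Fin n, ∀ hi : i ≠ j,
        Z i j = ((1 - Q)⁻¹ *ᵥ q) ⟨i, hi⟩ * Z j j := by
  have hle : ∀ t : ℕ, ∀ a b : {i : Fin n // i ≠ j},
      0 ≤ (Q ^ t) a b ∧ (Q ^ t) a b ≤ (W ^ t) a.1 b.1 ∧ ∀ x y, 0 ≤ (W ^ t) x y := by
    intro t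
    induction t with
    | zero =>
      intro a b
      refine ⟨?_, ?_, ?_⟩
      · simp only [pow_zero, Matrix.one_apply]; split_ifs <;> norm_num
      · simp only [pow_zero, Matrix.one_apply, Subtype.ext_iff]; exact le_refl _
      · intro x y
        simp only [pow_zero, Matrix.one_apply]; split_ifs <;> norm_num
    | succ t ih =>
      intro a b
      refine ⟨?_, ?_, ?_⟩
      · rw [pow_succ, Matrix.mul_apply]
        exact Finset.sum_nonneg fun c _ =>
          mul_nonneg (ih a c).1 (by rw [hQ]; exact hW _ _)
      · rw [pow_succ, pow_succ, Matrix.mul_apply, Matrix.mul_apply,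
          Fintype.sum_eq_add_sum_subtype_ne _ j]
        have h1 : 0 ≤ (W ^ t) a.1 j * W j b.1 := mul_nonneg ((ih a b).2.2 _ _) (hW _ _)
        have h2 : ∑ c, (Q ^ t) a c * Q c b
            ≤ ∑ c : {i : Fin n // i ≠ j}, (W ^ t) a.1 c.1 * W c.1 b.1 := by
          refine Finset.sum_le_sum fun c _ => ?_
          rw [hQ]
          exact mul_le_mul_of_nonneg_right (ih a c).2.1 (hW _ _)
        linarith
      · intro x y
        rw [pow_succ, Matrix.mul_apply]
        exact Finset.sum_nonneg fun c _ => mul_nonneg ((ih a b).2.2 _ _) (hW _ _)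
  have hQs : Summable (fun t : ℕ => Q ^ t) := by
    refine Pi.summable.2 fun a => Pi.summable.2 fun b => ?_
    have h := Pi.summable.1 (Pi.summable.1 hsum a.1) b.1
    exact Summable.of_nonneg_of_le (fun t => (hle t a b).1) (fun t => (hle t a b).2.1) h
  have hr : (1 - Q) * ∑' t : ℕ, Q ^ t = 1 := hQs.one_sub_mul_tsum_pow
  have hl : (∑' t : ℕ, Q ^ t) * (1 - Q) = 1 := hQs.tsum_pow_mul_one_sub
  have hu : IsUnit (1 - Q) := ⟨⟨_, _, hr, hl⟩, rfl⟩
  refine ⟨hQs, hu, fun i hi => ?_⟩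
  have hWZ : (1 - W) * Z = 1 := by rw [hZ]; exact hsum.one_sub_mul_tsum_pow
  have key : (1 - Q) *ᵥ (fun a : {i : Fin n // i ≠ j} => Z a.1 j) = Z j j • q := by
    funext a
    have h := congrFun (congrFun hWZ a.1) j
    rw [sub_mul, one_mul, Matrix.sub_apply, Matrix.mul_apply, Matrix.one_apply_ne a.2,
      Fintype.sum_eq_add_sum_subtype_ne _ j] at h
    rw [Matrix.sub_mulVec, Matrix.one_mulVec]
    simp only [Pi.sub_apply, Matrix.mulVec, dotProduct, hQ, Pi.smul_apply, smul_eq_mul, hq]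
    linarith
  have h2 := congrArg (fun v => (1 - Q)⁻¹ *ᵥ v) key
  simp only [Matrix.mulVec_mulVec, Matrix.mulVec_smul] at h2
  rw [Matrix.nonsing_inv_mul _ ((Matrix.isUnit_iff_isUnit_det _).1 hu), Matrix.one_mulVec] at h2
  have h3 := congrFun h2 ⟨i, hi⟩
  simp only [Pi.smul_apply, smul_eq_mul] at h3
  rw [h3, mul_comm]
end

section
/- Let W be an n×n real matrix with nonnegative entries whose Neumann series ∑_{t=0}^∞ W^t converges, and let Z = ∑_{t=0}^∞ W^t = (I − W)^{-1}. Then for all indices i, j, k: Z_{ik} · Z_{kj} ≤ Z_{ij} · Z_{kk}. -/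
open Matrix

/-- For the fundamental matrix `Z = ∑ W^t = (I - W)⁻¹` of a nonnegative matrix `W`,
`Z_{ik} Z_{kj} ≤ Z_{ij} Z_{kk}`. -/
theorem stmt12 (n : ℕ) (W : Matrix (Fin n) (Fin n) ℝ)
    (hW : ∀ i j, 0 ≤ W i j)
    (hsum : Summable (fun t : ℕ => W ^ t))
    (Z : Matrix (Fin n) (Fin n) ℝ) (hZ : Z = ∑' t : ℕ, W ^ t)
    (hZinv : Z = (1 - W)⁻¹)
    (i j k : Fin n) :
    Z i k * Z k j ≤ Z i j * Z k k := by
  have hpow : ∀ t : ℕ, ∀ a b, 0 ≤ (W ^ t) a b := by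
    intro t
    induction t with
    | zero =>
      intro a b
      rw [pow_zero, Matrix.one_apply]
      split_ifs <;> norm_num
    | succ t ih =>
      intro a b
      rw [pow_succ, Matrix.mul_apply]
      exact Finset.sum_nonneg fun l _ => mul_nonneg (ih a l) (hW l b)
  have hhas : HasSum (fun t : ℕ => W ^ t) Z := hZ ▸ hsum.hasSum
  have hZnn : 0 ≤ Z k k :=
    (Pi.hasSum.1 (Pi.hasSum.1 hhas k) k).nonneg fun t => hpow t k k
  have hrec : Z = 1 + W * Z := by
    have h1 : HasSum (fun t : ℕ => W ^ (t + 1)) (W * Z) := by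
      simpa only [pow_succ'] using hhas.mul_left W
    have h2 := h1.zero_add
    rw [pow_zero] at h2
    exact hhas.unique h2
  have hz : ∀ a b, Z a b = (1 : Matrix (Fin n) (Fin n) ℝ) a b + ∑ l, W a l * Z l b := by
    intro a b
    conv_lhs => rw [hrec]
    rw [Matrix.add_apply, Matrix.mul_apply]
  let v : Fin n → ℝ := fun a => Z a j * Z k k - Z a k * Z k j
  let u : Fin n → ℝ := fun a => max 0 (-v a)
  have hu0 : ∀ a, 0 ≤ u a := fun a => le_max_left _ _
  have huv : ∀ a, -v a ≤ u a := fun a => le_max_right _ _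
  have hu : ∀ a, u a ≤ ∑ l, W a l * u l := by
    intro a
    have hnn : 0 ≤ ∑ l, W a l * u l := Finset.sum_nonneg fun l _ => mul_nonneg (hW a l) (hu0 l)
    refine max_le hnn ?_
    by_cases hak : a = k
    · have : v a = 0 := by
        simp only [v, hak]
        ring
      rw [this, neg_zero]
      exact hnn
    · have h1 : v a = (1 : Matrix (Fin n) (Fin n) ℝ) a j * Z k k + ∑ l, W a l * v l := by
        have e : ∑ l, W a l * v l
            = (∑ l, W a l * Z l j) * Z k k - (∑ l, W a l * Z l k) * Z k j := by
          rw [Finset.sum_mul, Finset.sum_mul, ← Finset.sum_sub_distrib]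
          refine Finset.sum_congr rfl fun l _ => ?_
          simp only [v]
          ring
        have e1 := hz a j
        have e2 := hz a k
        rw [Matrix.one_apply_ne hak] at e2
        rw [e]
        simp only [v]
        rw [e1, e2]
        ring
      have h2 : 0 ≤ (1 : Matrix (Fin n) (Fin n) ℝ) a j * Z k k := by
        have := hpow 0 a j
        rw [pow_zero] at this
        exact mul_nonneg this hZnn
      have h3 : ∑ l, -(W a l * v l) ≤ ∑ l, W a l * u l := by
        refine Finset.sum_le_sum fun l _ => ?_
        rw [← mul_neg]
        exact mul_le_mul_of_nonneg_left (huv l) (hW a l)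
      rw [Finset.sum_neg_distrib] at h3
      linarith
  have hut : ∀ t : ℕ, ∀ a, u a ≤ ∑ l, (W ^ t) a l * u l := by
    intro t
    induction t with
    | zero =>
      intro a
      simp [Matrix.one_apply]
    | succ t ih =>
      intro a
      refine (ih a).trans ?_
      calc ∑ l, (W ^ t) a l * u l ≤ ∑ l, (W ^ t) a l * ∑ m, W l m * u m :=
            Finset.sum_le_sum fun l _ => mul_le_mul_of_nonneg_left (hu l) (hpow t a l)
        _ = ∑ l, (W ^ (t + 1)) a l * u l := by
            simp only [pow_succ, Matrix.mul_apply, Finset.mul_sum, Finset.sum_mul]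
            rw [Finset.sum_comm]
            simp only [mul_assoc]
  have hlim : Filter.Tendsto (fun t : ℕ => ∑ l, (W ^ t) i l * u l) Filter.atTop (nhds 0) := by
    have : Filter.Tendsto (fun t : ℕ => ∑ l, (W ^ t) i l * u l) Filter.atTop
        (nhds (∑ l : Fin n, 0 * u l)) := by
      refine tendsto_finsetSum _ fun l _ => Filter.Tendsto.mul_const _ ?_
      exact (Pi.hasSum.1 (Pi.hasSum.1 hhas i) l).summable.tendsto_atTop_zero
    simpa using this
  have hui : u i ≤ 0 := ge_of_tendsto' hlim fun t => hut t i
  have := huv i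
  simp only [v] at this
  linarith
end

section
/- Let n ≥ 2, let W be an n×n real matrix with nonnegative entries whose Neumann series converges with sum Z = (I − W)^{-1}, and let a, b ∈ ℝ^n be positive vectors. Define γ_{ij} = a_i · b_j · Z_{ij} and assume γ_{ij} > 0 for all i, j and ∑_{i,j} γ_{ij} = 1. Define Δ_{ij} = −(log γ_{ij} + log γ_{ji})/2 for i ≠ j and Δ_{ii} = 0. Then Δ is a distance metric on {1,…,n}: Δ_{ij} ≥ 0 for all i, j, with Δ_{ij} = 0 if and only if i = j; Δ_{ij} = Δ_{ji} for all i, j; and Δ_{ij} ≤ Δ_{ik} + Δ_{kj} for all i, j, k. -/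
open Matrix

theorem Z_key (n : ℕ) (W Z : Matrix (Fin n) (Fin n) ℝ)
    (hW : ∀ i j, 0 ≤ W i j) (hZ : ∀ i j, 0 < Z i j)
    (h1 : Z * (1 - W) = 1) (h2 : (1 - W) * Z = 1) (i j k : Fin n) :
    Z i k * Z k j ≤ Z i j * Z k k := by
  set v : Fin n → ℝ := fun i => Z i j * Z k k - Z i k * Z k j with hv
  set u : Fin n → ℝ := fun i => max (-v i) 0 with hu
  have hvk : v k = 0 := by simp only [hv]; ring
  have hZW : ∀ p q, Z p q = (1 : Matrix (Fin n) (Fin n) ℝ) p q + ∑ l, W p l * Z l q := by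
    intro p q
    have h3 : Z = 1 + W * Z := by
      rw [← h2, sub_mul, one_mul]; abel
    have := congrFun (congrFun h3 p) q
    rwa [Matrix.add_apply, Matrix.mul_apply] at this
  have hu0 : ∀ p, 0 ≤ u p := fun p => le_max_right _ _
  have hWu : ∀ p, 0 ≤ ∑ l, W p l * u l := fun p =>
    Finset.sum_nonneg fun l _ => mul_nonneg (hW p l) (hu0 l)
  have hvW : ∀ p, p ≠ k → ∑ l, W p l * v l ≤ v p := by
    intro p hp
    have e : v p = (1 : Matrix (Fin n) (Fin n) ℝ) p j * Z k k + ∑ l, W p l * v l := by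
      have e1 : ∑ l, W p l * v l
          = (∑ l, W p l * Z l j) * Z k k - (∑ l, W p l * Z l k) * Z k j := by
        rw [Finset.sum_mul, Finset.sum_mul, ← Finset.sum_sub_distrib]
        refine Finset.sum_congr rfl fun l _ => ?_
        simp only [hv]; ring
      have e2 := hZW p j
      have e3 := hZW p k
      rw [Matrix.one_apply_ne hp] at e3
      rw [e1]
      change Z p j * Z k k - Z p k * Z k j = _
      rw [e2, e3]; ring
    have : 0 ≤ (1 : Matrix (Fin n) (Fin n) ℝ) p j * Z k k := by
      refine mul_nonneg ?_ (hZ k k).le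
      rw [Matrix.one_apply]; split_ifs <;> norm_num
    linarith
  have hle : ∀ p, u p ≤ ∑ l, W p l * u l := by
    intro p
    by_cases hp : p = k
    · have : u p = 0 := by simp [hu, hp, hvk]
      rw [this]; exact hWu p
    · refine max_le ?_ (hWu p)
      have h4 : ∑ l, W p l * (-v l) ≤ ∑ l, W p l * u l :=
        Finset.sum_le_sum fun l _ => mul_le_mul_of_nonneg_left (le_max_left _ _) (hW p l)
      have h5 := hvW p hp
      simp only [mul_neg, Finset.sum_neg_distrib] at h4
      linarith
  have hui : u i ≤ 0 := by
    have e : u = Z *ᵥ ((1 - W) *ᵥ u) := by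
      rw [Matrix.mulVec_mulVec, h1, Matrix.one_mulVec]
    rw [e]
    change ∑ l, Z i l * ((1 - W) *ᵥ u) l ≤ 0
    refine Finset.sum_nonpos fun l _ => mul_nonpos_of_nonneg_of_nonpos (hZ i l).le ?_
    rw [Matrix.sub_mulVec, Matrix.one_mulVec]
    exact sub_nonpos.2 (hle l)
  have : -v i ≤ 0 := (le_max_left _ _).trans hui
  simp only [hv] at this
  linarith

/-- The margin-constrained bag-of-paths surprisal distance is a distance metric. -/
theorem stmt13 (n : ℕ) (hn : 2 ≤ n) (W : Matrix (Fin n) (Fin n) ℝ)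
    (hW : ∀ i j, 0 ≤ W i j)
    (hsum : Summable (fun t : ℕ => W ^ t))
    (Z : Matrix (Fin n) (Fin n) ℝ) (hZ : Z = ∑' t : ℕ, W ^ t)
    (hZinv : Z = (1 - W)⁻¹)
    (a b : Fin n → ℝ) (ha : ∀ i, 0 < a i) (hb : ∀ i, 0 < b i)
    (γ : Matrix (Fin n) (Fin n) ℝ) (hγdef : ∀ i j, γ i j = a i * b j * Z i j)
    (hγpos : ∀ i j, 0 < γ i j) (hγ1 : ∑ i, ∑ j, γ i j = 1)
    (Δ : Matrix (Fin n) (Fin n) ℝ)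
    (hΔ : ∀ i j, Δ i j =
      if i = j then 0 else -(Real.log (γ i j) + Real.log (γ j i)) / 2) :
    (∀ i j, 0 ≤ Δ i j) ∧ (∀ i j, Δ i j = 0 ↔ i = j) ∧
      (∀ i j, Δ i j = Δ j i) ∧ (∀ i j k, Δ i j ≤ Δ i k + Δ k j) := by
  have hZpos : ∀ i j, 0 < Z i j := by
    intro i j
    have h := hγpos i j
    rw [hγdef] at h
    exact pos_of_mul_pos_right h (mul_pos (ha i) (hb j)).le
  have hdet : IsUnit (1 - W).det := by
    by_contra h
    rw [Matrix.nonsing_inv_apply_not_isUnit _ h] at hZinv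
    have := hZpos ⟨0, by omega⟩ ⟨0, by omega⟩
    simp [hZinv] at this
  have h1 : Z * (1 - W) = 1 := by rw [hZinv]; exact Matrix.nonsing_inv_mul _ hdet
  have h2 : (1 - W) * Z = 1 := by rw [hZinv]; exact Matrix.mul_nonsing_inv _ hdet
  have hrow : ∀ i, ∑ j, γ i j ≤ 1 := by
    intro i
    rw [← hγ1]
    exact Finset.single_le_sum (f := fun i => ∑ j, γ i j)
      (fun i _ => Finset.sum_nonneg fun j _ => (hγpos i j).le) (Finset.mem_univ i)
  have hle1 : ∀ i j, γ i j ≤ 1 := fun i j =>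
    (Finset.single_le_sum (f := fun j => γ i j)
      (fun j _ => (hγpos i j).le) (Finset.mem_univ j)).trans (hrow i)
  have hlt1 : ∀ i j, i ≠ j → γ i j < 1 := by
    intro i j hij
    have h := Finset.add_le_sum (f := fun j => γ i j)
      (fun j _ => (hγpos i j).le) (Finset.mem_univ i) (Finset.mem_univ j) hij
    have := hrow i
    have := hγpos i i
    linarith
  have hpos : ∀ i j, i ≠ j → 0 < Δ i j := by
    intro i j hij
    rw [hΔ, if_neg hij]
    have := Real.log_neg (hγpos i j) (hlt1 i j hij)
    have := Real.log_neg (hγpos j i) (hlt1 j i hij.symm)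
    linarith
  have hzero : ∀ i, Δ i i = 0 := fun i => by rw [hΔ, if_pos rfl]
  have hnn : ∀ i j, 0 ≤ Δ i j := by
    intro i j
    by_cases h : i = j
    · rw [h, hzero]
    · exact (hpos i j h).le
  have hγtri : ∀ i j k, Real.log (γ i k) + Real.log (γ k j) ≤ Real.log (γ i j) := by
    intro i j k
    rw [← Real.log_mul (hγpos i k).ne' (hγpos k j).ne']
    refine Real.log_le_log (mul_pos (hγpos i k) (hγpos k j)) ?_
    calc γ i k * γ k j = (a i * b k * a k * b j) * (Z i k * Z k j) := by
          rw [hγdef, hγdef]; ring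
      _ ≤ (a i * b k * a k * b j) * (Z i j * Z k k) :=
          mul_le_mul_of_nonneg_left (Z_key n W Z hW hZpos h1 h2 i j k)
            (mul_pos (mul_pos (mul_pos (ha i) (hb k)) (ha k)) (hb j)).le
      _ = γ i j * γ k k := by rw [hγdef i j, hγdef k k]; ring
      _ ≤ γ i j := mul_le_of_le_one_right (hγpos i j).le (hle1 k k)
  refine ⟨hnn, ?_, ?_, ?_⟩
  · intro i j
    refine ⟨fun h => ?_, fun h => by rw [h, hzero]⟩
    by_contra hij
    exact (hpos i j hij).ne' h
  · intro i j
    by_cases h : i = j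
    · rw [h]
    · rw [hΔ, hΔ, if_neg h, if_neg (Ne.symm h), add_comm]
  · intro i j k
    by_cases hij : i = j
    · rw [hij, hzero]; exact add_nonneg (hnn _ _) (hnn _ _)
    by_cases hik : i = k
    · rw [hik, hzero, zero_add]
    by_cases hkj : k = j
    · rw [hkj, hzero, add_zero]
    rw [hΔ i j, hΔ i k, hΔ k j, if_neg hij, if_neg hik, if_neg hkj]
    have := hγtri i j k
    have := hγtri j i k
    linarith
end

section
/- Let n ≥ 2, let W be an n×n real matrix with nonnegative entries whose Neumann series converges with sum Z = (I − W)^{-1} (so Z_{jj} ≥ 1 > 0 for all j), and let a, b ∈ ℝ^n be positive vectors. Define γ_{ij} = a_i · b_j · Z_{ij}/Z_{jj} and assume γ_{ij} > 0 for all i, j and ∑_{i,j} γ_{ij} = 1. Define Δ_{ij} = −(log γ_{ij} + log γ_{ji})/2 for i ≠ j and Δ_{ii} = 0. Then Δ is a distance metric on {1,…,n}: Δ_{ij} ≥ 0 for all i, j, with Δ_{ij} = 0 if and only if i = j; Δ_{ij} = Δ_{ji} for all i, j; and Δ_{ij} ≤ Δ_{ik} + Δ_{kj} for all i, j, k. 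-/
open Matrix

theorem neg_part_zero {n : ℕ} (W : Matrix (Fin n) (Fin n) ℝ) (hW : ∀ i j, 0 ≤ W i j)
    (hsum : Summable (fun t : ℕ => W ^ t)) (u : Fin n → ℝ)
    (hu : ∀ i, u i ≤ (W *ᵥ u) i) : ∀ i, u i ≤ 0 := by
  have hpow : ∀ t : ℕ, ∀ i, u i ≤ ((W ^ t) *ᵥ u) i := by
    intro t
    induction t with
    | zero => intro i; simp
    | succ t ih =>
      intro i
      rw [pow_succ', ← Matrix.mulVec_mulVec]
      refine (hu i).trans ?_
      simp only [Matrix.mulVec, dotProduct] at ih ⊢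
      exact Finset.sum_le_sum fun l _ => mul_le_mul_of_nonneg_left (ih l) (hW i l)
  intro i
  have h0 := hsum.tendsto_atTop_zero
  have hc : Continuous (fun M : Matrix (Fin n) (Fin n) ℝ => (M *ᵥ u) i) := by
    simp only [Matrix.mulVec, dotProduct]
    fun_prop
  have h1 := (hc.tendsto 0).comp h0
  simp only [Matrix.zero_mulVec, Pi.zero_apply] at h1
  exact ge_of_tendsto' h1 (fun t => hpow t i)

theorem key_ineq {n : ℕ} (W : Matrix (Fin n) (Fin n) ℝ) (hW : ∀ i j, 0 ≤ W i j)
    (hsum : Summable (fun t : ℕ => W ^ t)) (Z : Matrix (Fin n) (Fin n) ℝ)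
    (hZ : Z = 1 + W * Z) (hdiag : ∀ j, 1 ≤ Z j j) (j k : Fin n) :
    ∀ i, Z i k * Z k j ≤ Z i j * Z k k := by
  have hu := neg_part_zero W hW hsum
    (fun i => max (Z i k * Z k j - Z i j * Z k k) 0) ?_
  · intro i
    have := (le_max_left _ _).trans (hu i)
    linarith
  intro i
  simp only [Matrix.mulVec, dotProduct]
  have hnn : 0 ≤ ∑ l, W i l * max (Z l k * Z k j - Z l j * Z k k) 0 :=
    Finset.sum_nonneg fun l _ => mul_nonneg (hW i l) (le_max_right _ _)
  refine max_le ?_ hnn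
  by_cases hik : i = k
  · subst hik
    linarith [mul_comm (Z i i) (Z i j)]
  have e1 : Z i k = ∑ l, W i l * Z l k := by
    have := congrFun (congrFun hZ i) k
    simpa [Matrix.add_apply, Matrix.mul_apply, Matrix.one_apply, hik] using this
  have e2 : ∑ l, W i l * Z l j ≤ Z i j := by
    have := congrFun (congrFun hZ i) j
    rw [Matrix.add_apply, Matrix.mul_apply, Matrix.one_apply] at this
    split_ifs at this <;> linarith
  have hk : 0 ≤ Z k k := by linarith [hdiag k]
  have e3 := mul_le_mul_of_nonneg_right e2 hk
  have e4 : ∑ l, W i l * (Z l k * Z k j - Z l j * Z k k) =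
      (∑ l, W i l * Z l k) * Z k j - (∑ l, W i l * Z l j) * Z k k := by
    rw [Finset.sum_mul, Finset.sum_mul, ← Finset.sum_sub_distrib]
    exact Finset.sum_congr rfl fun l _ => by ring
  have e5 : ∑ l, W i l * (Z l k * Z k j - Z l j * Z k k) ≤
      ∑ l, W i l * max (Z l k * Z k j - Z l j * Z k k) 0 :=
    Finset.sum_le_sum fun l _ => mul_le_mul_of_nonneg_left (le_max_left _ _) (hW i l)
  rw [← e1] at e4
  linarith

/-- The margin-constrained bag-of-hitting-paths surprisal distance is a distance metric. -/
theorem stmt14 (n : ℕ) (hn : 2 ≤ n) (W : Matrix (Fin n) (Fin n) ℝ)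
    (hW : ∀ i j, 0 ≤ W i j)
    (hsum : Summable (fun t : ℕ => W ^ t))
    (Z : Matrix (Fin n) (Fin n) ℝ) (hZ : Z = ∑' t : ℕ, W ^ t)
    (hZinv : Z = (1 - W)⁻¹)
    (hdiag : ∀ j, 1 ≤ Z j j)
    (a b : Fin n → ℝ) (ha : ∀ i, 0 < a i) (hb : ∀ i, 0 < b i)
    (γ : Matrix (Fin n) (Fin n) ℝ) (hγdef : ∀ i j, γ i j = a i * b j * Z i j / Z j j)
    (hγpos : ∀ i j, 0 < γ i j) (hγ1 : ∑ i, ∑ j, γ i j = 1)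
    (Δ : Matrix (Fin n) (Fin n) ℝ)
    (hΔ : ∀ i j, Δ i j =
      if i = j then 0 else -(Real.log (γ i j) + Real.log (γ j i)) / 2) :
    (∀ i j, 0 ≤ Δ i j) ∧ (∀ i j, Δ i j = 0 ↔ i = j) ∧
      (∀ i j, Δ i j = Δ j i) ∧ (∀ i j k, Δ i j ≤ Δ i k + Δ k j) := by
  have hdet : IsUnit (1 - W).det := by
    by_contra h
    have h2 := hdiag ⟨0, by omega⟩
    rw [hZinv, Matrix.nonsing_inv_apply_not_isUnit _ h] at h2
    simp at h2
    linarith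
  have hZ1 : Z = 1 + W * Z := by
    have h := Matrix.mul_nonsing_inv _ hdet
    rw [← hZinv, Matrix.sub_mul, Matrix.one_mul] at h
    exact sub_eq_iff_eq_add.mp h
  have hZp : ∀ j, 0 < Z j j := fun j => by linarith [hdiag j]
  have hrow : ∀ i j, γ i j ≤ ∑ j, γ i j := fun i j =>
    Finset.single_le_sum (fun l _ => (hγpos i l).le) (Finset.mem_univ j)
  have hle : ∀ i j, γ i j ≤ 1 := fun i j => by
    rw [← hγ1]
    exact (hrow i j).trans (Finset.single_le_sum (f := fun i => ∑ j, γ i j)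
      (fun l _ => Finset.sum_nonneg fun m _ => (hγpos l m).le) (Finset.mem_univ i))
  have hlt : ∀ i j, i ≠ j → γ i j < 1 := fun i j hij => by
    rw [← hγ1]
    refine (hrow i j).trans_lt (Finset.single_lt_sum (f := fun i => ∑ j, γ i j) (i := i) (j := j)
      hij.symm (Finset.mem_univ i) (Finset.mem_univ j) ?_ ?_)
    · exact (hγpos j j).trans_le (hrow j j)
    · exact fun l _ _ => Finset.sum_nonneg fun m _ => (hγpos l m).le
  have hpos : ∀ i j, i ≠ j → 0 < Δ i j := fun i j hij => by
    rw [hΔ, if_neg hij]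
    linarith [Real.log_neg (hγpos i j) (hlt i j hij), Real.log_neg (hγpos j i) (hlt j i hij.symm)]
  have hself : ∀ i, Δ i i = 0 := fun i => by rw [hΔ, if_pos rfl]
  have hnn : ∀ i j, 0 ≤ Δ i j := fun i j => by
    by_cases h : i = j
    · subst h; exact (hself i).ge
    · exact (hpos i j h).le
  have htri : ∀ i j k, Real.log (γ i k) + Real.log (γ k j) ≤ Real.log (γ i j) := by
    intro i j k
    rw [← Real.log_mul (hγpos i k).ne' (hγpos k j).ne']
    apply Real.log_le_log (mul_pos (hγpos i k) (hγpos k j))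
    have h1 : γ i k * γ k j ≤ γ k k * γ i j := by
      have hk := key_ineq W hW hsum Z hZ1 hdiag j k i
      have hc : 0 ≤ a i * b k * a k * b j / (Z k k * Z j j) := by
        have := ha i; have := hb k; have := ha k; have := hb j
        have := hZp k; have := hZp j
        positivity
      have h2 := mul_le_mul_of_nonneg_left hk hc
      have e1 : γ i k * γ k j = a i * b k * a k * b j / (Z k k * Z j j) * (Z i k * Z k j) := by
        rw [hγdef, hγdef]
        have := (hZp k).ne'; have := (hZp j).ne'
        field_simp
      have e2 : γ k k * γ i j = a i * b k * a k * b j / (Z k k * Z j j) * (Z i j * Z k k) := by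
        rw [hγdef, hγdef]
        have := (hZp k).ne'; have := (hZp j).ne'
        field_simp
      rw [e1, e2]; exact h2
    exact h1.trans (mul_le_of_le_one_left (hγpos i j).le (hle k k))
  refine ⟨hnn, fun i j => ⟨fun h => ?_, fun h => ?_⟩, fun i j => ?_, fun i j k => ?_⟩
  · by_contra hij
    exact (hpos i j hij).ne' h
  · subst h; exact hself i
  · by_cases h : i = j
    · subst h; rfl
    · rw [hΔ, hΔ, if_neg h, if_neg (Ne.symm h), add_comm]
  · by_cases hij : i = j
    · subst hij; rw [hself]; exact add_nonneg (hnn _ _) (hnn _ _)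
    by_cases hik : i = k
    · subst hik; rw [hself, zero_add]
    by_cases hkj : k = j
    · subst hkj; rw [hself, add_zero]
    rw [hΔ, hΔ i k, hΔ k j, if_neg hij, if_neg hik, if_neg hkj]
    linarith [htri i j k, htri j i k]
end

section
/- Let W be an n×n real matrix with nonnegative entries such that I − W is invertible, and let Z = (I − W)^{-1} with entries z_{ij}; assume z_{jj} > 0 for all j and write z^h_{ij} = z_{ij}/z_{jj}. Let σ_out ∈ ℝ^n be a nonnegative vector and let μ_in, μ_out ∈ ℝ^n be positive vectors satisfying, elementwise, (μ_in)_j = 1/∑_l z^h_{jl}·(μ_out)_l·(σ_out)_l for every j. Define n̄^h_{ij} = (1/((μ_out)_i·(μ_in)_j) − ∑_l (σ_out)_l · z^h_{li} · z^h_{jl}) · z_{ii} · W_{ij}. Then for every i: ∑_j n̄^h_{ij} = (1/((μ_in)_i·(μ_out)_i) − ∑_l (σ_out)_l · z^h_{li} · z^h_{il}) · z_{ii}. -/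
open Matrix

/-- Matrix identity for the expected number of visits to a node in the margin-constrained
bag-of-hitting-paths model. -/
theorem stmt17 (n : ℕ) (W : Matrix (Fin n) (Fin n) ℝ)
    (hW : ∀ i j, 0 ≤ W i j) (hinv : IsUnit (1 - W))
    (Z : Matrix (Fin n) (Fin n) ℝ) (hZ : Z = (1 - W)⁻¹)
    (hdiag : ∀ j, 0 < Z j j)
    (zh : Matrix (Fin n) (Fin n) ℝ) (hzh : ∀ i j, zh i j = Z i j / Z j j)
    (σout : Fin n → ℝ) (hσ : ∀ i, 0 ≤ σout i)
    (μin μout : Fin n → ℝ) (hμin : ∀ i, 0 < μin i) (hμout : ∀ i, 0 < μout i)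
    (hfix : ∀ j, μin j = 1 / ∑ l, zh j l * μout l * σout l)
    (N : Matrix (Fin n) (Fin n) ℝ)
    (hN : ∀ i j, N i j =
      (1 / (μout i * μin j) - ∑ l, σout l * zh l i * zh j l) * Z i i * W i j) :
    ∀ i, ∑ j, N i j =
      (1 / (μin i * μout i) - ∑ l, σout l * zh l i * zh i l) * Z i i := by
  intro i
  have hWZ : W * Z = Z - 1 := by
    have h : (1 - W) * Z = 1 := by
      rw [hZ]
      exact Matrix.mul_nonsing_inv _ ((Matrix.isUnit_iff_isUnit_det _).mp hinv)
    rw [sub_mul, one_mul] at h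
    rw [← h]
    abel
  have hi : μout i ≠ 0 := (hμout i).ne'
  have hkey : ∀ j, 1 / (μout i * μin j) - ∑ l, σout l * zh l i * zh j l
      = ∑ l, σout l * (μout l / μout i - zh l i) * zh j l := by
    intro j
    have h1 : 1 / (μout i * μin j) = (∑ l, zh j l * μout l * σout l) / μout i := by
      rw [hfix j, one_div, mul_inv, one_div, inv_inv, div_eq_mul_inv, mul_comm]
    rw [h1, Finset.sum_div, ← Finset.sum_sub_distrib]
    refine Finset.sum_congr rfl fun l _ => ?_
    ring
  have hsum : ∀ l, ∑ j, W i j * zh j l = zh i l - (if i = l then 1 else 0) / Z l l := by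
    intro l
    have h := congrFun (congrFun hWZ i) l
    rw [Matrix.mul_apply, Matrix.sub_apply, Matrix.one_apply] at h
    simp only [hzh, ← mul_div_assoc]
    rw [← Finset.sum_div, h, sub_div]
  rw [mul_comm (μin i), hkey i]
  simp only [hN, hkey]
  calc ∑ j, (∑ l, σout l * (μout l / μout i - zh l i) * zh j l) * Z i i * W i j
      = ∑ l, σout l * (μout l / μout i - zh l i) * (∑ j, W i j * zh j l) * Z i i := by
        simp only [Finset.sum_mul, Finset.mul_sum]
        rw [Finset.sum_comm]
        refine Finset.sum_congr rfl fun l _ => Finset.sum_congr rfl fun j _ => ?_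
        ring
    _ = (∑ l, σout l * (μout l / μout i - zh l i) * zh i l) * Z i i := by
        rw [Finset.sum_mul]
        refine Finset.sum_congr rfl fun l _ => ?_
        rw [hsum]
        by_cases h : i = l
        · subst h
          have : zh i i = 1 := by rw [hzh, div_self (hdiag i).ne']
          rw [this, div_self hi]
          simp
        · simp [h]
end
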